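/- arXiv:1808.03366 — 5 statements merged into one kernel-verified Lean document; each statement's English description precedes it below -/
import Mathlib

section
/- Let F be a field of characteristic 0, B a vector space over F with dim_F B < ∞, and G a group whose abelianization G̃ = G/[G,G] is finitely generated. Then for every n ≥ 1, the F-vector space L_n(G,B) of B-valued n-morphisms of G satisfies dim_F L_n(G,B) = dim_F L_n(G̃,B) < ∞. -/
/-- A `B`-valued `n`-morphism (polymorphism) of a group `G`: a function
`G^n → B` which is additive in each of its `n` arguments. -/
def IsPolymorphism {G B : Type*} [Group G] [AddCommGroup B] (n : ℕ)
    (L : (Fin n → G) → B) : Prop :=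
  ∀ (i : Fin n) (g : Fin n → G) (g' g'' : G),
    L (Function.update g i (g' * g''))
      = L (Function.update g i g') + L (Function.update g i g'')

/-- The `F`-vector space `L_n(G,B)` of all `B`-valued `n`-morphisms of `G`,
as a subspace of the space of all functions `Gⁿ → B`. -/
def polymorphismSubmodule (F G B : Type*) [Field F] [Group G] [AddCommGroup B]
    [Module F B] (n : ℕ) : Submodule F ((Fin n → G) → B) where
  carrier := {L | IsPolymorphism n L}
  add_mem' := by
    intro L₁ L₂ h₁ h₂ i g g' g''
    simp only [Pi.add_apply, h₁ i g g' g'', h₂ i g g' g'']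
    abel
  zero_mem' := by
    intro i g g' g''
    simp
  smul_mem' := by
    intro c L h i g g' g''
    simp only [Pi.smul_apply, h i g g' g'', smul_add]

/-! Additivity in a single slot says that freezing all other arguments gives a homomorphism into an
abelian group. Such a homomorphism kills commutators and is determined by its values on generators.
Changing the arguments one slot at a time, the first fact shows that polymorphisms of `G` factor
through the abelianization, and the second that they are determined by their values on tuples of
generators, of which there are finitely many when the group is finitely generated. -/

namespace IsPolymorphism

variable {G H B : Type*} [Group G] [Group H] [AddCommGroup B] {n : ℕ} {L M : (Fin n → G) → B}

/-- The homomorphism given by a polymorphism in its `i`-th argument, the other arguments being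
those of `g`. The target is written multiplicatively, `G` being a multiplicative group. -/
def slotHom (hL : IsPolymorphism n L) (i : Fin n) (g : Fin n → G) : G →* Multiplicative B :=
  MonoidHom.mk' (fun x => .ofAdd (L (Function.update g i x)))
    fun x y => congrArg Multiplicative.ofAdd (hL i g x y)

theorem update_eq_update_of_inv_mul_mem_commutator (hL : IsPolymorphism n L) (i : Fin n)
    (g : Fin n → G) {x y : G} (hxy : x⁻¹ * y ∈ commutator G) :
    L (Function.update g i x) = L (Function.update g i y) :=
  Multiplicative.ofAdd.injective <|
    ((hL.slotHom i g).eq_iff.2 <| Abelianization.commutator_subset_ker _ hxy).symm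

theorem factorsThrough_of_ker_le_commutator (hL : IsPolymorphism n L) {f : G →* H}
    (hf : f.ker ≤ commutator G) : L.FactorsThrough (f ∘ ·) := by
  intro g g' hgg'
  suffices h : ∀ T : Finset (Fin n), L (T.piecewise g' g) = L g by
    simpa only [Finset.piecewise_univ] using (h Finset.univ).symm
  intro T
  induction T using Finset.induction_on with
  | empty => rw [Finset.piecewise_empty]
  | insert i T hi ih =>
    have hmem : (g' i)⁻¹ * g i ∈ commutator G := hf (f.eq_iff.1 (congrFun hgg' i))
    have hgi : g i = T.piecewise g' g i := (Finset.piecewise_eq_of_notMem T g' g hi).symm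
    rw [Finset.piecewise_insert, hL.update_eq_update_of_inv_mul_mem_commutator i _ hmem,
      hgi, Function.update_eq_self, ih]

theorem eq_of_closure_eq_top (hL : IsPolymorphism n L) (hM : IsPolymorphism n M) {S : Set G}
    (hS : Subgroup.closure S = ⊤) (h : ∀ g : Fin n → G, (∀ j, g j ∈ S) → L g = M g) : L = M := by
  suffices hT : ∀ (T : Finset (Fin n)) (g : Fin n → G), (∀ j ∉ T, g j ∈ S) → L g = M g from
    funext fun g => hT Finset.univ g fun j hj => absurd (Finset.mem_univ j) hj
  intro T
  induction T using Finset.induction_on with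
  | empty => exact fun g hg => h g fun j => hg j (Finset.notMem_empty j)
  | insert i T _ ih =>
    intro g hg
    have hslot : hL.slotHom i g = hM.slotHom i g := by
      refine MonoidHom.eq_of_eqOn_dense hS fun x hx => congrArg Multiplicative.ofAdd <| ih _ ?_
      intro j hj
      rcases eq_or_ne j i with rfl | hji
      · rwa [Function.update_self]
      · rw [Function.update_of_ne hji]
        exact hg j (by simp [hji, hj])
    have hgi : L (Function.update g i (g i)) = M (Function.update g i (g i)) :=
      Multiplicative.ofAdd.injective (DFunLike.congr_fun hslot (g i))
    rwa [Function.update_eq_self] at hgi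

theorem comp_monoidHom {L : (Fin n → H) → B} (hL : IsPolymorphism n L)
    (f : G →* H) : IsPolymorphism n fun g : Fin n → G => L (f ∘ g) := by
  intro i g x y
  simp only [Function.comp_update, map_mul, hL i]

theorem of_comp_surjective {L : (Fin n → H) → B} {f : G →* H}
    (hf : Function.Surjective f) (hL : IsPolymorphism n fun g : Fin n → G => L (f ∘ g)) :
    IsPolymorphism n L := by
  intro i h x y
  obtain ⟨g, rfl⟩ := hf.comp_left h
  obtain ⟨x, rfl⟩ := hf x
  obtain ⟨y, rfl⟩ := hf y
  simpa only [Function.comp_update, map_mul] using hL i g x y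

end IsPolymorphism

section Pullback

variable (F : Type*) {G H : Type*} (B : Type*) [Field F] [Group G] [Group H] [AddCommGroup B]
  [Module F B] (n : ℕ)

/-- Pullback of polymorphisms along a group homomorphism, `L ↦ L ∘ fⁿ`. -/
def polymorphismComap (f : G →* H) :
    polymorphismSubmodule F H B n →ₗ[F] polymorphismSubmodule F G B n :=
  (LinearMap.funLeft F B (f ∘ ·)).restrict fun _ hL => IsPolymorphism.comp_monoidHom hL f

theorem polymorphismComap_injective {f : G →* H} (hf : Function.Surjective f) :
    Function.Injective (polymorphismComap F B n f) := fun _ _ h =>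
  Subtype.ext <| LinearMap.funLeft_injective_of_surjective F B _ hf.comp_left <|
    congrArg Subtype.val h

theorem polymorphismComap_surjective {f : G →* H} (hf : Function.Surjective f)
    (hker : f.ker ≤ commutator G) : Function.Surjective (polymorphismComap F B n f) := by
  rintro ⟨L, hL⟩
  obtain ⟨M, rfl⟩ := (Function.factorsThrough_iff L).1 (hL.factorsThrough_of_ker_le_commutator hker)
  exact ⟨⟨M, hL.of_comp_surjective hf⟩, rfl⟩

variable (G) in
/-- The isomorphism `L_n(G̃,B) ≃ L_n(G,B)` given by pullback along the projection of `G` onto its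
abelianization `G̃`. -/
noncomputable def polymorphismAbelianizationEquiv :
    polymorphismSubmodule F (Abelianization G) B n ≃ₗ[F] polymorphismSubmodule F G B n :=
  have hsurj : Function.Surjective (Abelianization.of (G := G)) := QuotientGroup.mk_surjective
  LinearEquiv.ofBijective (polymorphismComap F B n Abelianization.of)
    ⟨polymorphismComap_injective F B n hsurj,
      polymorphismComap_surjective F B n hsurj (Abelianization.ker_of G).le⟩

end Pullback

theorem finiteDimensional_polymorphismSubmodule (F G B : Type*) [Field F] [Group G] [Group.FG G]
    [AddCommGroup B] [Module F B] [FiniteDimensional F B] (n : ℕ) :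
    FiniteDimensional F (polymorphismSubmodule F G B n) := by
  obtain ⟨S, hS⟩ := Group.fg_def.1 ‹Group.FG G›
  let restrictToGenerators : polymorphismSubmodule F G B n →ₗ[F] (Fin n → S) → B :=
    LinearMap.funLeft F B (fun s i => (s i : G)) ∘ₗ Submodule.subtype _
  refine FiniteDimensional.of_injective restrictToGenerators fun L M hLM => Subtype.ext ?_
  exact L.2.eq_of_closure_eq_top M.2 hS fun g hg => congrFun hLM fun i => ⟨g i, hg i⟩

theorem stmt_7_general (F G B : Type*) [Field F] [Group G]
    [AddCommGroup B] [Module F B] [FiniteDimensional F B]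
    (hFG : Group.FG (Abelianization G)) (n : ℕ) :
    FiniteDimensional F (polymorphismSubmodule F G B n) ∧
      Module.finrank F (polymorphismSubmodule F G B n)
        = Module.finrank F (polymorphismSubmodule F (Abelianization G) B n) := by
  have e := polymorphismAbelianizationEquiv F G B n
  have := finiteDimensional_polymorphismSubmodule F (Abelianization G) B n
  exact ⟨e.finiteDimensional, e.finrank_eq.symm⟩

/-- Let `F` be a field of characteristic `0`, `B` a
finite-dimensional `F`-vector space, and `G` a group whose abelianization
`G̃ = G/[G,G]` is finitely generated.  Then for every `n ≥ 1` the space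
`L_n(G,B)` of `B`-valued `n`-morphisms of `G` is finite dimensional, of the
same dimension as `L_n(G̃,B)`. -/
theorem stmt_7 (F G B : Type*) [Field F] [CharZero F] [Group G]
    [AddCommGroup B] [Module F B] [FiniteDimensional F B]
    (hFG : Group.FG (Abelianization G)) (n : ℕ) (hn : 1 ≤ n) :
    FiniteDimensional F (polymorphismSubmodule F G B n) ∧
      Module.finrank F (polymorphismSubmodule F G B n)
        = Module.finrank F (polymorphismSubmodule F (Abelianization G) B n) := by
  exact stmt_7_general F G B hFG n
end

section
/- For every n ≥ 1, the operator identity δ^n ∘ d_{n-1} = d_n ∘ δ^{n-1} + (−1)^n d_n ∘ d_{n-1} holds on C^{n-1}(G,A); that is, for every c ∈ C^{n-1}(G,A) and all g_1,…,g_{n+1} ∈ G, (δ^n(d_{n-1}c))(g_1,…,g_{n+1}) = (d_n(δ^{n-1}c))(g_1,…,g_{n+1}) + (−1)^n (d_n(d_{n-1}c))(g_1,…,g_{n+1}). -/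
/-- The single-step difference operator `d : Cⁿ(G,A) → C^{n+1}(G,A)` for a
right `G`-action `act` on `A`:
`(d c)(g₁,…,g_{n+1}) = (c(g₁,…,gₙ))^{g_{n+1}} − c(g₁,…,gₙ)`. -/
def dstep {A G : Type*} [AddCommGroup A] [Group G] (act : A → G → A) (n : ℕ)
    (c : (Fin n → G) → A) : (Fin (n + 1) → G) → A := fun g =>
  act (c (fun i => g i.castSucc)) (g (Fin.last n)) - c (fun i => g i.castSucc)

/-- The coboundary operator `δⁿ : Cⁿ(G,A) → C^{n+1}(G,A)` for the trivial left
`G`-action on `A`. -/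
def coboundary {G A : Type*} [Group G] [AddCommGroup A] (n : ℕ)
    (c : (Fin n → G) → A) : (Fin (n + 1) → G) → A := fun g =>
  c (fun i => g i.succ)
    + (∑ i : Fin n, ((-1 : ℤ) ^ ((i : ℕ) + 1)) •
        c (fun j => if (j : ℕ) < (i : ℕ) then g j.castSucc
            else if j = i then g i.castSucc * g i.succ
            else g j.succ))
    + ((-1 : ℤ) ^ (n + 1)) • c (fun i => g i.castSucc)

/-! Set `(T_φ c)(g₁, …, gₙ₊₁) = φ(gₙ₊₁) c(g₁, …, gₙ)`. All faces of `(g₁, …, gₘ₊₂)` except the last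
two leave the entry `gₘ₊₂` alone, so `δ` and `T_φ` commute up to the end terms:
`δ T_φ = T_φ δ + (-1)ᵐ⁺¹ (T_φ T_φ - T_φ T_1 - T_1 T_φ)` for every right action `φ`.
Since `d = T_φ - T_1`, subtracting the instance `φ = 1` from this identity completes the square
`(T_φ - T_1)²`. -/

section ContractNth

variable {α : Type*} {n : ℕ} (op : α → α → α)

theorem contractNth_last_eq_init (g : Fin (n + 1) → α) :
    Fin.contractNth (Fin.last n) op g = Fin.init g := by
  ext k
  exact Fin.contractNth_apply_of_lt _ op g k k.isLt

theorem init_contractNth_castSucc (j : Fin (n + 1)) (g : Fin (n + 2) → α) :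
    Fin.init (Fin.contractNth j.castSucc op g) = Fin.contractNth j op (Fin.init g) :=
  rfl

theorem contractNth_castSucc_castSucc_apply_last (i : Fin n) (g : Fin (n + 2) → α) :
    Fin.contractNth i.castSucc.castSucc op g (Fin.last n) = g (Fin.last (n + 1)) :=
  Fin.contractNth_apply_of_gt _ op g _ i.isLt

theorem contractNth_castSucc_last_apply_last (g : Fin (n + 2) → α) :
    Fin.contractNth (Fin.last n).castSucc op g (Fin.last n) =
      op (g (Fin.last n).castSucc) (g (Fin.last (n + 1))) :=
  Fin.contractNth_apply_of_eq _ op g _ rfl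

end ContractNth

section Coboundary

variable {A G : Type*} [AddCommGroup A] [Group G] {n : ℕ}

theorem coboundary_apply (c : (Fin n → G) → A) (g : Fin (n + 1) → G) :
    coboundary n c g =
      c (Fin.tail g)
        + (∑ i : Fin n, (-1 : ℤ) ^ ((i : ℕ) + 1) • c (Fin.contractNth i.castSucc (· * ·) g))
        + (-1 : ℤ) ^ (n + 1) • c (Fin.init g) := by
  have merge_eq (i : Fin n) :
      (fun j : Fin n => if (j : ℕ) < (i : ℕ) then g j.castSucc
        else if j = i then g i.castSucc * g i.succ
        else g j.succ) = Fin.contractNth i.castSucc (· * ·) g := by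
    ext j
    simp only [Fin.contractNth, Fin.val_castSucc, Fin.ext_iff]
    grind
  simp only [coboundary, merge_eq]
  rfl

theorem coboundary_sub (c c' : (Fin n → G) → A) :
    coboundary n (c - c') = coboundary n c - coboundary n c' := by
  ext g
  simp only [coboundary, Pi.sub_apply, smul_sub, Finset.sum_sub_distrib]
  abel

end Coboundary

section LastTwist

variable {A G : Type*} {n : ℕ}

/-- The operator `c ↦ ((g₁, …, gₙ₊₁) ↦ φ(gₙ₊₁) c(g₁, …, gₙ))` raising the degree of a cochain by
one, for a family `φ` of endomorphisms of `A`. For `φ = 1` it ignores the last argument, so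
`dstep` is the difference between the operators of the given action and of `1`. -/
def lastTwist [AddMonoid A] (φ : G → AddMonoid.End A) (c : (Fin n → G) → A) :
    (Fin (n + 1) → G) → A :=
  fun g => φ (g (Fin.last n)) (c (Fin.init g))

theorem lastTwist_sub [AddCommGroup A] (φ : G → AddMonoid.End A) (c c' : (Fin n → G) → A) :
    lastTwist φ (c - c') = lastTwist φ c - lastTwist φ c' := by
  ext g
  exact map_sub (φ (g (Fin.last n))) _ _

theorem lastTwist_contractNth_castSucc_castSucc [AddMonoid A] (φ : G → AddMonoid.End A)
    (op : G → G → G) (c : (Fin n → G) → A) (i : Fin n) (g : Fin (n + 2) → G) :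
    lastTwist φ c (Fin.contractNth i.castSucc.castSucc op g) =
      φ (g (Fin.last (n + 1))) (c (Fin.contractNth i.castSucc op (Fin.init g))) := by
  rw [lastTwist, init_contractNth_castSucc, contractNth_castSucc_castSucc_apply_last]

theorem lastTwist_contractNth_castSucc_last [AddMonoid A] {φ : G → AddMonoid.End A}
    {op : G → G → G} (hφ : ∀ x y, φ (op x y) = φ y * φ x) (c : (Fin n → G) → A)
    (g : Fin (n + 2) → G) :
    lastTwist φ c (Fin.contractNth (Fin.last n).castSucc op g) =
      lastTwist φ (lastTwist φ c) g := by
  rw [lastTwist, init_contractNth_castSucc, contractNth_last_eq_init,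
    contractNth_castSucc_last_apply_last, hφ]
  rfl

theorem lastTwist_coboundary_apply [AddCommGroup A] [Group G] (φ : G → AddMonoid.End A)
    (c : (Fin n → G) → A) (g : Fin (n + 2) → G) :
    lastTwist φ (coboundary n c) g =
      lastTwist φ c (Fin.tail g)
        + (∑ i : Fin n, (-1 : ℤ) ^ ((i : ℕ) + 1) •
            lastTwist φ c (Fin.contractNth i.castSucc.castSucc (· * ·) g))
        + (-1 : ℤ) ^ (n + 1) • lastTwist φ (lastTwist 1 c) g := by
  simp only [lastTwist_contractNth_castSucc_castSucc]
  simp only [lastTwist, coboundary_apply, map_add, map_sum, map_zsmul]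
  rfl

theorem coboundary_lastTwist [AddCommGroup A] [Group G] {φ : G → AddMonoid.End A}
    (hφ : ∀ x y, φ (x * y) = φ y * φ x) (c : (Fin n → G) → A) :
    coboundary (n + 1) (lastTwist φ c) =
      lastTwist φ (coboundary n c)
        + (-1 : ℤ) ^ (n + 1) •
          (lastTwist φ (lastTwist φ c) - lastTwist φ (lastTwist 1 c)
            - lastTwist 1 (lastTwist φ c)) := by
  ext g
  have lastTwist_init : lastTwist φ c (Fin.init g) = lastTwist 1 (lastTwist φ c) g := rfl
  rw [coboundary_apply, Fin.sum_univ_castSucc, lastTwist_contractNth_castSucc_last hφ,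
    lastTwist_init]
  simp only [Pi.add_apply, Pi.sub_apply, Pi.smul_apply, lastTwist_coboundary_apply,
    Fin.val_castSucc, Fin.val_last, pow_succ _ (n + 1)]
  module

end LastTwist

/-- For every `n ≥ 1` (written here as `n = m + 1`), the
operator identity `δⁿ ∘ d_{n-1} = dₙ ∘ δ^{n-1} + (−1)ⁿ dₙ ∘ d_{n-1}` holds on
cochains with `n − 1 = m` arguments. -/
theorem stmt_10 {A G : Type*} [AddCommGroup A] [Group G] (act : A → G → A)
    (hadd : ∀ (a b : A) (g : G), act (a + b) g = act a g + act b g)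
    (hone : ∀ a : A, act a 1 = a)
    (hcomp : ∀ (a : A) (g h : G), act (act a g) h = act a (g * h))
    (m : ℕ) (c : (Fin m → G) → A) (g : Fin (m + 2) → G) :
    coboundary (m + 1) (dstep act m c) g
      = dstep act (m + 1) (coboundary m c) g
        + ((-1 : ℤ) ^ (m + 1)) • dstep act (m + 1) (dstep act m c) g := by
  let φ : G → AddMonoid.End A := fun x => AddMonoidHom.mk' (act · x) (hadd · · x)
  have map_mul_rev (x y : G) : φ (x * y) = φ y * φ x :=
    AddMonoidHom.ext fun a => (hcomp a x y).symm
  have dstep_eq (n : ℕ) (b : (Fin n → G) → A) :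
      dstep act n b = lastTwist φ b - lastTwist 1 b := rfl
  have twisted := coboundary_lastTwist map_mul_rev c
  have untwisted := coboundary_lastTwist (φ := 1) (fun _ _ => rfl) c
  suffices coboundary (m + 1) (dstep act m c) =
      dstep act (m + 1) (coboundary m c)
        + (-1 : ℤ) ^ (m + 1) • dstep act (m + 1) (dstep act m c) from congrFun this g
  simp only [dstep_eq, coboundary_sub, lastTwist_sub, twisted, untwisted]
  module
end

section
/- Let F be a field of characteristic 0, G a group, and A an F-vector space endowed with a linear right G-action. If the abelianization G̃ = G/[G,G] is finitely generated and dim_F A^G < ∞, then dim_F P_n(G,A) < ∞ for every n ≥ 0. -/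
/-- The iterated difference operator `D^n` associated with a right `G`-action
`act : A → G → A` on an additive abelian group `A`. -/
def iterD {A G : Type*} [AddCommGroup A] [Group G] (act : A → G → A) :
    (n : ℕ) → A → (Fin n → G) → A
  | 0, a, _ => a
  | n + 1, a, g =>
      act (iterD act n a (fun i => g i.castSucc)) (g (Fin.last n))
        - iterD act n a (fun i => g i.castSucc)

theorem iterD_add {A G : Type*} [AddCommGroup A] [Group G] (act : A → G → A)
    (hadd : ∀ (a b : A) (g : G), act (a + b) g = act a g + act b g) :
    ∀ (n : ℕ) (a b : A) (g : Fin n → G),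
      iterD act n (a + b) g = iterD act n a g + iterD act n b g
  | 0, a, b, g => rfl
  | n + 1, a, b, g => by
      simp only [iterD, iterD_add act hadd n, hadd]
      abel

theorem iterD_smul {F A G : Type*} [Field F] [AddCommGroup A] [Module F A]
    [Group G] (act : A → G → A)
    (hsmul : ∀ (c : F) (a : A) (g : G), act (c • a) g = c • act a g) :
    ∀ (n : ℕ) (c : F) (a : A) (g : Fin n → G),
      iterD act n (c • a) g = c • iterD act n a g
  | 0, c, a, g => rfl
  | n + 1, c, a, g => by
      simp only [iterD, iterD_smul act hsmul n, hsmul, smul_sub]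

/-- The subspace `A^G ⊆ A` of `G`-invariant elements. -/
def invariants (F : Type*) {A G : Type*} [Field F] [AddCommGroup A] [Module F A]
    [Group G] (act : A → G → A)
    (hadd : ∀ (a b : A) (g : G), act (a + b) g = act a g + act b g)
    (hsmul : ∀ (c : F) (a : A) (g : G), act (c • a) g = c • act a g) :
    Submodule F A where
  carrier := {a | ∀ g : G, act a g = a}
  add_mem' := by
    intro a b ha hb g
    rw [hadd, ha g, hb g]
  zero_mem' := by
    intro g
    simpa using hsmul 0 0 g
  smul_mem' := by
    intro c a ha g
    rw [hsmul, ha g]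

/-- The subspace `P_n(G,A) = ker D^{n+1} ⊆ A` of polynomial-like elements of
order at most `n`. -/
def polyElems (F : Type*) {A G : Type*} [Field F] [AddCommGroup A] [Module F A]
    [Group G] (act : A → G → A)
    (hadd : ∀ (a b : A) (g : G), act (a + b) g = act a g + act b g)
    (hsmul : ∀ (c : F) (a : A) (g : G), act (c • a) g = c • act a g)
    (n : ℕ) : Submodule F A where
  carrier := {a | ∀ g : Fin (n + 1) → G, iterD act (n + 1) a g = 0}
  add_mem' := by
    intro a b ha hb g
    rw [iterD_add act hadd, ha g, hb g, add_zero]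
  zero_mem' := by
    intro g
    have h := iterD_smul act hsmul (n + 1) (0 : F) 0 g
    simpa using h
  smul_mem' := by
    intro c a ha g
    rw [iterD_smul act hsmul, ha g, smul_zero]

/-!
If `a ∈ P_{n+1}`, then `g ↦ [a ^ g - a]` is a homomorphism from `G` to `P_n / P_{n-1}`, because the
second differences of `a` lie in `P_{n-1}`. Its target is commutative, so it is determined by its
values at finitely many elements `s` generating `G` modulo commutators. Hence `a ↦ (a ^ s - a)_s`
maps `P_{n+1}` to a finite power of `P_n` with kernel inside `P_n`, and finiteness propagates from
`P_0 = A ^ G`.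
-/

theorem exists_finite_closure_sup_commutator_eq_top (G : Type*) [Group G]
    [Group.FG (Abelianization G)] :
    ∃ S : Set G, S.Finite ∧ Subgroup.closure S ⊔ commutator G = ⊤ := by
  obtain ⟨T, hT, hTfin⟩ := Group.fg_iff.1 ‹Group.FG (Abelianization G)›
  have hof : Function.Surjective (Abelianization.of (G := G)) := QuotientGroup.mk_surjective
  obtain ⟨S, -, hS, rfl⟩ := hTfin.exists_subset_finite_image_eq
    (Set.image_univ_of_surjective hof ▸ Set.subset_univ T)
  refine ⟨S, hS, ?_⟩
  rw [← Abelianization.ker_of, ← Subgroup.comap_map_eq, MonoidHom.map_closure, hT,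
    Subgroup.comap_top]

section Filtration

variable {R M G A : Type*} [Ring R] [Monoid M] [Group G] [AddCommGroup A] [Module R A]

/-- For a vector `a` whose second differences lie in the submodule `U`, the homomorphism
`g ↦ [ρ g a - a]` from `M` to `A ⧸ U`. -/
def differenceHom (ρ : Representation R M A) (U : Submodule R A) (a : A)
    (ha : ∀ g h, ρ g (ρ h a - a) - (ρ h a - a) ∈ U) : M →* Multiplicative (A ⧸ U) where
  toFun g := .ofAdd (U.mkQ (ρ g a - a))
  map_one' := by simp
  map_mul' g h := by
    rw [← ofAdd_add, ← map_add]
    refine congrArg _ ((Submodule.Quotient.eq U).2 ?_)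
    convert ha g h using 1
    rw [map_mul, Module.End.mul_apply, map_sub]
    abel

theorem differenceHom_eq_one_iff (ρ : Representation R M A) (U : Submodule R A) (a : A)
    (ha : ∀ g h, ρ g (ρ h a - a) - (ρ h a - a) ∈ U) (g : M) :
    differenceHom ρ U a ha g = 1 ↔ ρ g a - a ∈ U :=
  Submodule.Quotient.mk_eq_zero U

theorem difference_mem_of_closure_sup_commutator_eq_top (ρ : Representation R G A)
    (U : Submodule R A) (a : A) (ha : ∀ g h, ρ g (ρ h a - a) - (ρ h a - a) ∈ U) {S : Set G}
    (hS : Subgroup.closure S ⊔ commutator G = ⊤) (haS : ∀ s ∈ S, ρ s a - a ∈ U) (g : G) :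
    ρ g a - a ∈ U := by
  have hker : Subgroup.closure S ⊔ commutator G ≤ (differenceHom ρ U a ha).ker :=
    sup_le ((Subgroup.closure_le _).2 fun s hs ↦
      (differenceHom_eq_one_iff ρ U a ha s).2 (haS s hs))
      (Abelianization.commutator_subset_ker _)
  exact (differenceHom_eq_one_iff ρ U a ha g).1 (hker (hS ▸ Subgroup.mem_top g))

/-- The vectors annihilated by every composite of `n` difference operators `ρ g - 1`. The index is
one more than the order: `polyOrderLT ρ (n + 1)` corresponds to `P_n`, and `polyOrderLT ρ 0 = ⊥`
plays the part of `P_{-1}`. -/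
def polyOrderLT (ρ : Representation R M A) : ℕ → Submodule R A
  | 0 => ⊥
  | n + 1 => ⨅ g, (polyOrderLT ρ n).comap (ρ g - 1)

theorem mem_polyOrderLT_succ (ρ : Representation R M A) (n : ℕ) (a : A) :
    a ∈ polyOrderLT ρ (n + 1) ↔ ∀ g, ρ g a - a ∈ polyOrderLT ρ n := by
  simp [polyOrderLT]

/-- The joint difference map `a ↦ (ρ s a - a)_s` over `s ∈ S`, which bounds each step of the
filtration in terms of the previous one. -/
def polyOrderLT.differences (ρ : Representation R M A) (S : Set M) (n : ℕ) :
    polyOrderLT ρ (n + 1) →ₗ[R] S → polyOrderLT ρ n :=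
  LinearMap.pi fun s ↦ (ρ s - 1).restrict fun a ha ↦ (mem_polyOrderLT_succ ρ n a).1 ha s

theorem polyOrderLT.mem_of_differences_eq_zero (ρ : Representation R G A) {S : Set G}
    (hS : Subgroup.closure S ⊔ commutator G = ⊤) (n : ℕ) {a : polyOrderLT ρ (n + 2)}
    (ha : differences ρ S (n + 1) a = 0) : (a : A) ∈ polyOrderLT ρ (n + 1) := by
  have hsecond (g h : G) : ρ g (ρ h a - a) - (ρ h a - a) ∈ polyOrderLT ρ n :=
    (mem_polyOrderLT_succ ρ n _).1 ((mem_polyOrderLT_succ ρ (n + 1) _).1 a.2 h) g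
  have hfixed (s : G) (hs : s ∈ S) : ρ s a - a = 0 :=
    congrArg Subtype.val (congrFun ha ⟨s, hs⟩)
  refine (mem_polyOrderLT_succ ρ n _).2 <|
    difference_mem_of_closure_sup_commutator_eq_top ρ _ _ hsecond hS fun s hs ↦ ?_
  rw [hfixed s hs]
  exact zero_mem _

theorem isNoetherian_polyOrderLT_add_two (ρ : Representation R G A) [Group.FG (Abelianization G)]
    (n : ℕ) [IsNoetherian R (polyOrderLT ρ (n + 1))] :
    IsNoetherian R (polyOrderLT ρ (n + 2)) := by
  obtain ⟨S, hSfin, hS⟩ := exists_finite_closure_sup_commutator_eq_top G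
  have := hSfin.to_subtype
  let D := polyOrderLT.differences ρ S (n + 1)
  let i : LinearMap.ker D →ₗ[R] polyOrderLT ρ (n + 1) :=
    ((polyOrderLT ρ (n + 2)).subtype ∘ₗ (LinearMap.ker D).subtype).codRestrict _
      fun a ↦ polyOrderLT.mem_of_differences_eq_zero ρ hS n a.2
  have hi : Function.Injective i :=
    (LinearMap.injective_codRestrict_iff _).2 (Subtype.val_injective.comp Subtype.val_injective)
  have : IsNoetherian R (LinearMap.ker D) := isNoetherian_of_injective i hi
  exact isNoetherian_of_range_eq_ker (LinearMap.ker D).subtype D (Submodule.range_subtype _)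

theorem isNoetherian_polyOrderLT (ρ : Representation R G A) [Group.FG (Abelianization G)]
    [IsNoetherian R (polyOrderLT ρ 1)] : ∀ n, IsNoetherian R (polyOrderLT ρ n)
  | 0 => inferInstanceAs (IsNoetherian R (⊥ : Submodule R A))
  | 1 => inferInstance
  | n + 2 =>
    have := isNoetherian_polyOrderLT ρ (n + 1)
    isNoetherian_polyOrderLT_add_two ρ n

end Filtration

section RightAction

theorem iterD_succ_eq_iterD_difference {A G : Type*} [AddCommGroup A] [Group G]
    (act : A → G → A) (a : A) : ∀ (n : ℕ) (g : Fin (n + 1) → G),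
    iterD act (n + 1) a g = iterD act n (act a (g 0) - a) (Fin.tail g)
  | 0, _ => rfl
  | n + 1, g => by
    rw [iterD, iterD_succ_eq_iterD_difference act a n]
    rfl

variable {F A G : Type*} [Field F] [AddCommGroup A] [Module F A] [Group G] (act : A → G → A)
  (hadd : ∀ (a b : A) (g : G), act (a + b) g = act a g + act b g)
  (hsmul : ∀ (c : F) (a : A) (g : G), act (c • a) g = c • act a g)
  (hone : ∀ a : A, act a 1 = a)
  (hcomp : ∀ (a : A) (g h : G), act (act a g) h = act a (g * h))

/-- The representation attached to a linear right action. Since representations act on the left,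
`g` acts as `a ↦ a ^ g⁻¹`. -/
def rightActionRep : Representation F G A where
  toFun g :=
    { toFun a := act a g⁻¹
      map_add' a b := hadd a b g⁻¹
      map_smul' c a := hsmul c a g⁻¹ }
  map_one' := LinearMap.ext fun a ↦ by simp [hone]
  map_mul' g h := LinearMap.ext fun a ↦ by simp [hcomp]

theorem mem_polyOrderLT_rightActionRep_succ (n : ℕ) (a : A) :
    a ∈ polyOrderLT (rightActionRep act hadd hsmul hone hcomp) (n + 1) ↔
      ∀ g, act a g - a ∈ polyOrderLT (rightActionRep act hadd hsmul hone hcomp) n := by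
  rw [mem_polyOrderLT_succ, ← (Equiv.inv G).forall_congr_right]
  simp [rightActionRep]

theorem mem_polyOrderLT_rightActionRep_iff (n : ℕ) (a : A) :
    a ∈ polyOrderLT (rightActionRep act hadd hsmul hone hcomp) n ↔
      ∀ g : Fin n → G, iterD act n a g = 0 := by
  induction n generalizing a with
  | zero => simp [polyOrderLT, iterD]
  | succ n ih =>
    simp only [mem_polyOrderLT_rightActionRep_succ, ih, Fin.forall_fin_succ_pi,
      iterD_succ_eq_iterD_difference, Fin.cons_zero, Fin.tail_cons]

theorem polyElems_eq_polyOrderLT (n : ℕ) :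
    polyElems F act hadd hsmul n =
      polyOrderLT (rightActionRep act hadd hsmul hone hcomp) (n + 1) :=
  Submodule.ext fun a ↦
    (mem_polyOrderLT_rightActionRep_iff act hadd hsmul hone hcomp (n + 1) a).symm

theorem polyElems_zero_eq_invariants :
    polyElems F act hadd hsmul 0 = invariants F act hadd hsmul := by
  ext a
  simp [polyElems, invariants, iterD, sub_eq_zero, Fin.forall_fin_succ_pi]

end RightAction

theorem stmt_14_general {F A G : Type*} [Field F] [AddCommGroup A]
    [Module F A] [Group G] (act : A → G → A)
    (hadd : ∀ (a b : A) (g : G), act (a + b) g = act a g + act b g)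
    (hsmul : ∀ (c : F) (a : A) (g : G), act (c • a) g = c • act a g)
    (hone : ∀ a : A, act a 1 = a)
    (hcomp : ∀ (a : A) (g h : G), act (act a g) h = act a (g * h))
    (hFG : Group.FG (Abelianization G))
    (hfin : FiniteDimensional F (invariants F act hadd hsmul))
    (n : ℕ) :
    FiniteDimensional F (polyElems F act hadd hsmul n) := by
  let ρ : Representation F G A := rightActionRep act hadd hsmul hone hcomp
  have hP (k : ℕ) : polyElems F act hadd hsmul k = polyOrderLT ρ (k + 1) :=
    polyElems_eq_polyOrderLT act hadd hsmul hone hcomp k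
  have : IsNoetherian F (polyOrderLT ρ 1) := by
    rw [← hP 0, polyElems_zero_eq_invariants]
    exact IsNoetherian.iff_fg.2 hfin
  rw [hP n]
  exact IsNoetherian.iff_fg.1 (isNoetherian_polyOrderLT ρ (n + 1))

/-- **Main Theorem.** Let `F` be a field of characteristic `0`,
`G` a group, and `A` an `F`-vector space with a linear right `G`-action.  If
the abelianization `G̃ = G/[G,G]` is finitely generated and `dim_F A^G < ∞`,
then `dim_F P_n(G,A) < ∞` for every `n ≥ 0`. -/
theorem stmt_14 {F A G : Type*} [Field F] [CharZero F] [AddCommGroup A]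
    [Module F A] [Group G] (act : A → G → A)
    (hadd : ∀ (a b : A) (g : G), act (a + b) g = act a g + act b g)
    (hsmul : ∀ (c : F) (a : A) (g : G), act (c • a) g = c • act a g)
    (hone : ∀ a : A, act a 1 = a)
    (hcomp : ∀ (a : A) (g h : G), act (act a g) h = act a (g * h))
    (hFG : Group.FG (Abelianization G))
    (hfin : FiniteDimensional F (invariants F act hadd hsmul))
    (n : ℕ) :
    FiniteDimensional F (polyElems F act hadd hsmul n) :=
  stmt_14_general act hadd hsmul hone hcomp hFG hfin n
end

section
/- Let G ⊂ R^r be a lattice of rank r acting on C(R^r) by translations. A function p ∈ C(R^r) satisfies D^{n+1} p = 0 (i.e., [D^{n+1}p](g_1,…,g_{n+1}) = 0 for all g_1,…,g_{n+1} ∈ G) if and only if p is a G-periodic polynomial of degree at most n, i.e., p(x) = Σ_{j_1+⋯+j_r ≤ n} f_{j_1,…,j_r}(x) x_1^{j_1}⋯x_r^{j_r} for some continuous G-periodic functions f_{j_1,…,j_r} ∈ C(R^r). -/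
/-- The iterated difference operator for the translation action of vectors of
`ℝ^r` on functions `ℝ^r → ℝ`. -/
def transD (r : ℕ) : (n : ℕ) → ((Fin r → ℝ) → ℝ) → (Fin n → (Fin r → ℝ)) →
    (Fin r → ℝ) → ℝ
  | 0, f, _ => f
  | n + 1, f, g => fun x =>
      transD r n f (fun i => g i.castSucc) (x + g (Fin.last n))
        - transD r n f (fun i => g i.castSucc) x

/-!
Functions killed by `n + 1` differences from `G` are generalized polynomials of degree at most `n`,
and the Leibniz rule for differences makes this degree subadditive under products. Periodic
functions have degree `0` and coordinates degree `1`, so periodic polynomials of degree at most `n`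
are killed.

Conversely, let `ℓ i` be linear forms dual to the basis `b` of `G`. If `p` is killed by `n + 1`
differences, then the Euler-type expression `∑ i, ℓ i • Δ_[b i] p` equals `n • p` up to a function
killed by `n` differences. The differences `Δ_[b i] p` and this error term have smaller degree,
so by induction they are periodic polynomials, and one divides by `n`.
-/

open Finset

open scoped fwdDiff

section DiffKer

variable {M R A : Type*} [AddCommGroup M] [Ring R] [AddCommGroup A] [Module R A]

/-- The functions `M → A` annihilated by any `n` successive differences with steps in `G`, that
is, the generalized polynomials of degree less than `n` (for `n = 0`, only the zero function). -/
def diffKer (R : Type*) {M A : Type*} [AddCommGroup M] [Ring R] [AddCommGroup A] [Module R A]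
    (G : AddSubgroup M) : ℕ → Submodule R (M → A)
  | 0 => ⊥
  | n + 1 =>
    { carrier := {p | ∀ g ∈ G, Δ_[g] p ∈ diffKer R G n}
      zero_mem' := fun g _ =>
        (fwdDiff_const g (0 : A) : Δ_[g] (0 : M → A) = 0) ▸ (diffKer R G n).zero_mem
      add_mem' := fun {p q} hp hq g hg =>
        fwdDiff_add g p q ▸ (diffKer R G n).add_mem (hp g hg) (hq g hg)
      smul_mem' := fun c p hp g hg =>
        fwdDiff_const_smul g c p ▸ (diffKer R G n).smul_mem c (hp g hg) }

namespace diffKer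

variable {G : AddSubgroup M} {p : M → A} {g : M} {n : ℕ}

theorem mem_zero_iff : p ∈ diffKer R G 0 ↔ p = 0 := Iff.rfl

theorem mem_succ_iff : p ∈ diffKer R G (n + 1) ↔ ∀ g ∈ G, Δ_[g] p ∈ diffKer R G n := Iff.rfl

theorem mem_one_iff : p ∈ diffKer R G 1 ↔ ∀ g ∈ G, Function.Periodic p g := by
  simp only [mem_succ_iff, mem_zero_iff, funext_iff, fwdDiff, Pi.zero_apply, sub_eq_zero,
    Function.Periodic]

theorem monotone : Monotone (diffKer R G : ℕ → Submodule R (M → A)) := by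
  refine monotone_nat_of_le_succ fun n => ?_
  induction n with
  | zero => exact bot_le
  | succ n ih => exact fun p hp g hg => ih (hp g hg)

theorem fwdDiff_mem (hp : p ∈ diffKer R G n) (hg : g ∈ G) : Δ_[g] p ∈ diffKer R G (n - 1) := by
  cases n with
  | zero => exact monotone (Nat.zero_le 1) hp g hg
  | succ n => exact hp g hg

theorem shift_mem (hp : p ∈ diffKer R G n) (hg : g ∈ G) :
    (fun x => p (x + g)) ∈ diffKer R G n := by
  have shift_eq : (fun x => p (x + g)) = Δ_[g] p + p := by ext x; simp [fwdDiff]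
  rw [shift_eq]
  exact add_mem (monotone (Nat.sub_le n 1) (fwdDiff_mem hp hg)) hp

theorem mem_closure_succ_iff {s : Set M} :
    p ∈ diffKer R (AddSubgroup.closure s) (n + 1) ↔
      ∀ g ∈ s, Δ_[g] p ∈ diffKer R (AddSubgroup.closure s) n := by
  refine ⟨fun hp g hg => hp g (AddSubgroup.subset_closure hg), fun hp g hg => ?_⟩
  induction hg using AddSubgroup.closure_induction with
  | mem g hg => exact hp g hg
  | zero =>
    have fwdDiff_zero_step : Δ_[0] p = 0 := by ext x; simp [fwdDiff]
    exact fwdDiff_zero_step ▸ zero_mem _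
  | add g h _ hh hpg hph =>
    have fwdDiff_add_step : Δ_[g + h] p = (fun x => Δ_[g] p (x + h)) + Δ_[h] p := by
      ext x; simp [fwdDiff, add_assoc, add_comm g h]
    exact fwdDiff_add_step ▸ add_mem (shift_mem hpg hh) hph
  | neg g hg hpg =>
    have fwdDiff_neg_step : Δ_[-g] p = -fun x => Δ_[g] p (x + -g) := by
      ext x; simp [fwdDiff]
    exact fwdDiff_neg_step ▸ neg_mem (shift_mem hpg (neg_mem hg))

/-- If membership in `diffKer R G (d + 1)` is read as having degree at most `d`, this is the
subadditivity of the degree under products. -/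
theorem smul_mem {u : M → R} {l m : ℕ} (hu : u ∈ diffKer R G l) (hp : p ∈ diffKer R G m)
    (hlm : l + m ≤ n + 1) : u • p ∈ diffKer R G n := by
  induction n generalizing u p l m with
  | zero =>
    obtain rfl | rfl : l = 0 ∨ m = 0 := by omega
    · simp [mem_zero_iff.1 hu]
    · simp [mem_zero_iff.1 hp]
  | succ n ih =>
    obtain rfl | hl := l.eq_zero_or_pos
    · simp [mem_zero_iff.1 hu]
    obtain rfl | hm := m.eq_zero_or_pos
    · simp [mem_zero_iff.1 hp]
    intro g hg
    have hΔu := fwdDiff_mem hu hg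
    have hΔp := fwdDiff_mem hp hg
    rw [fwdDiff_smul]
    exact add_mem (add_mem (ih hΔu hp (by omega)) (ih hu hΔp (by omega)))
      (ih hΔu hΔp (by omega))

theorem addMonoidHom_mem (l : M →+ A) : ⇑l ∈ diffKer R G 2 :=
  fun g _ => mem_one_iff.2 fun h _ x => by simp [fwdDiff]

section CommRing

variable {S : Type*} [CommRing S]

theorem prod_mem {ι : Type*} (s : Finset ι) {u : ι → M → S} {d : ι → ℕ}
    (hu : ∀ i ∈ s, u i ∈ diffKer S G (d i + 1)) :
    ∏ i ∈ s, u i ∈ diffKer S G (∑ i ∈ s, d i + 1) := by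
  classical
  induction s using Finset.induction_on with
  | empty => exact mem_one_iff.2 fun g _ x => by simp
  | insert i s hi ih =>
    rw [prod_insert hi, sum_insert hi]
    exact smul_mem (hu i (mem_insert_self i s))
      (ih fun j hj => hu j (mem_insert_of_mem hj)) (by omega)

theorem pow_mem {u : M → S} (hu : u ∈ diffKer S G 2) (d : ℕ) : u ^ d ∈ diffKer S G (d + 1) := by
  simpa using prod_mem (Finset.range d) (u := fun _ => u) (d := fun _ => 1) fun _ _ => hu

end CommRing

end diffKer

end DiffKer

section EulerOperator

variable {ι M R A : Type*} [Fintype ι] [AddCommGroup M] [Ring R] [AddCommGroup A] [Module R A]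

/-- The discrete analogue `∑ i, ℓ i • Δ_[b i]` of the Euler operator `∑ i, x i • ∂/∂x i`, where
`ℓ i` plays the role of the coordinate along `b i`. -/
def eulerOperator (b : ι → M) (ℓ : ι → M → R) (p : M → A) : M → A :=
  ∑ i, ℓ i • Δ_[b i] p

variable [DecidableEq ι] {b : ι → M} {ℓ : ι → M → R}

theorem fwdDiff_eulerOperator (hℓ : ∀ i j, Δ_[b j] (ℓ i) = if i = j then 1 else 0) (p : M → A)
    (j : ι) :
    Δ_[b j] (eulerOperator b ℓ p) =
      eulerOperator b ℓ (Δ_[b j] p) + Δ_[b j] p + Δ_[b j] (Δ_[b j] p) := by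
  have fwdDiff_comm (i : ι) : Δ_[b j] (Δ_[b i] p) = Δ_[b i] (Δ_[b j] p) := by
    ext x; simp only [fwdDiff, add_right_comm x (b i)]; abel
  simp only [eulerOperator, fwdDiff_finsetSum, fwdDiff_smul, hℓ, ite_smul, one_smul, zero_smul,
    sum_add_distrib, sum_ite_eq', mem_univ, if_true, fwdDiff_comm]
  abel

/-- As in Euler's identity for homogeneous functions, the Euler operator acts on the leading part
of a polynomial of degree `n` as multiplication by `n`. -/
theorem eulerOperator_sub_nsmul_mem_diffKer
    (hℓ : ∀ i j, Δ_[b j] (ℓ i) = if i = j then 1 else 0) {n : ℕ} {p : M → A}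
    (hp : p ∈ diffKer R (AddSubgroup.closure (Set.range b)) (n + 1)) :
    eulerOperator b ℓ p - n • p ∈ diffKer R (AddSubgroup.closure (Set.range b)) n := by
  induction n generalizing p with
  | zero =>
    have fwdDiff_eq_zero (i : ι) : Δ_[b i] p = 0 :=
      diffKer.mem_closure_succ_iff.1 hp (b i) (Set.mem_range_self i)
    simp [eulerOperator, fwdDiff_eq_zero]
  | succ n ih =>
    refine diffKer.mem_closure_succ_iff.2 (Set.forall_mem_range.2 fun j => ?_)
    have hbj := AddSubgroup.subset_closure (Set.mem_range_self (f := b) j)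
    have hΔp := hp (b j) hbj
    have fwdDiff_eq : Δ_[b j] (eulerOperator b ℓ p - (n + 1) • p) =
        (eulerOperator b ℓ (Δ_[b j] p) - n • Δ_[b j] p) + Δ_[b j] (Δ_[b j] p) := by
      rw [sub_eq_add_neg, ← smul_neg, fwdDiff_add, fwdDiff_const_smul,
        fwdDiff_eulerOperator hℓ, ← neg_one_smul ℤ p, fwdDiff_const_smul]
      module
    exact fwdDiff_eq ▸ add_mem (ih hΔp) (hΔp (b j) hbj)

end EulerOperator

theorem exists_dual_family {ι K V : Type*} [DecidableEq ι] [Field K] [AddCommGroup V] [Module K V]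
    {b : ι → V} (hb : LinearIndependent K b) :
    ∃ ℓ : ι → V →ₗ[K] K, ∀ i j, ℓ i (b j) = if i = j then 1 else 0 := by
  obtain ⟨repr, hrepr⟩ := LinearMap.exists_leftInverse_of_injective _ (LinearMap.ker_eq_bot.2 hb)
  refine ⟨fun i => Finsupp.lapply i ∘ₗ repr, fun i j => ?_⟩
  have repr_b : repr (b j) = Finsupp.single j 1 := by
    simpa using DFunLike.congr_fun hrepr (Finsupp.single j 1)
  simp [repr_b, Finsupp.single_apply, eq_comm]

section PeriodicPolynomial

/-- The space of continuous `G`-periodic functions, the coefficients of `G`-periodic polynomials. -/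
def continuousPeriodic (R : Type*) {M F : Type*} [AddCommGroup M] [TopologicalSpace M] [Ring R]
    [AddCommGroup F] [Module R F] [TopologicalSpace F] [ContinuousAdd F]
    [ContinuousConstSMul R F] (G : AddSubgroup M) : Submodule R (M → F) where
  carrier := {f | Continuous f ∧ ∀ g ∈ G, Function.Periodic f g}
  zero_mem' := ⟨continuous_zero, fun _ _ _ => rfl⟩
  add_mem' hf hf' := ⟨hf.1.add hf'.1, fun g hg x =>
    congrArg₂ (· + ·) (hf.2 g hg x) (hf'.2 g hg x)⟩
  smul_mem' c _ hf := ⟨hf.1.const_smul c, fun g hg => (hf.2 g hg).smul c⟩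

/-- The monomial `x ^ j` in the coordinates of `σ → R`, for a multi-index `j`. -/
def coordMonomial (R : Type*) {σ : Type*} [Fintype σ] [CommRing R] (j : σ → ℕ) (x : σ → R) : R :=
  ∏ k, x k ^ j k

theorem coordMonomial_add_single {R σ : Type*} [Fintype σ] [DecidableEq σ] [CommRing R]
    (j : σ → ℕ) (i : σ) :
    coordMonomial R (j + Pi.single i 1) =
      (fun x : σ → R => x i) • coordMonomial R j := by
  ext x
  simp only [coordMonomial, Pi.add_apply, pow_add, prod_mul_distrib]
  simp [coordMonomial, Pi.single_apply, pow_ite, mul_comm]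

variable {σ R F : Type*} [Fintype σ] [CommRing R] [TopologicalSpace R] [AddCommGroup F]
  [Module R F] [TopologicalSpace F] [ContinuousAdd F] [ContinuousConstSMul R F]

/-- The `G`-periodic polynomials of degree at most `n` in the coordinates of `σ → R`: sums of
monomials of degree at most `n` with continuous `G`-periodic coefficients in `F`. -/
def periodicPolynomial (G : AddSubgroup (σ → R)) (n : ℕ) : Submodule R ((σ → R) → F) :=
  ⨆ (j : σ → ℕ) (_ : ∑ k, j k ≤ n), (continuousPeriodic R G).map
    (DistribSMul.toLinearMap R ((σ → R) → F) (coordMonomial R j))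

namespace periodicPolynomial

variable {G : AddSubgroup (σ → R)} {p : (σ → R) → F} {n : ℕ}

theorem monomial_smul_mem {j : σ → ℕ} (hj : ∑ k, j k ≤ n) {f : (σ → R) → F}
    (hf : f ∈ continuousPeriodic R G) :
    coordMonomial R j • f ∈ periodicPolynomial G n :=
  (le_iSup₂_of_le j hj le_rfl : _ ≤ periodicPolynomial G n) (Submodule.mem_map_of_mem hf)

theorem le_iff {S : Submodule R ((σ → R) → F)} :
    periodicPolynomial G n ≤ S ↔ ∀ j : σ → ℕ, ∑ k, j k ≤ n →
      ∀ f ∈ continuousPeriodic R G, coordMonomial R j • f ∈ S :=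
  iSup₂_le_iff.trans <| forall₂_congr fun _ _ => Submodule.map_le_iff_le_comap

theorem monotone :
    Monotone (periodicPolynomial G : ℕ → Submodule R ((σ → R) → F)) :=
  fun _ _ hmn => le_iff.2 fun _ hj _ hf => monomial_smul_mem (hj.trans hmn) hf

theorem continuousPeriodic_le : continuousPeriodic R G ≤
    (periodicPolynomial G n : Submodule R ((σ → R) → F)) := fun f hf => by
  have coordMonomial_zero : coordMonomial R (0 : σ → ℕ) = 1 := by ext x; simp [coordMonomial]
  simpa [coordMonomial_zero] using monomial_smul_mem (j := 0) (n := n) (by simp) hf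

theorem coord_smul_mem (hp : p ∈ periodicPolynomial G n) (i : σ) :
    (fun x : σ → R => x i) • p ∈ periodicPolynomial G (n + 1) := by
  classical
  suffices periodicPolynomial G n ≤ (periodicPolynomial G (n + 1)).comap
      (DistribSMul.toLinearMap R ((σ → R) → F) (fun x : σ → R => x i)) from this hp
  refine le_iff.2 fun j hj f hf => ?_
  rw [Submodule.mem_comap, DistribSMul.toLinearMap_apply, ← smul_assoc,
    ← coordMonomial_add_single]
  exact monomial_smul_mem (by simpa [sum_add_distrib] using hj) hf

theorem linearMap_smul_mem (hp : p ∈ periodicPolynomial G n) (l : (σ → R) →ₗ[R] R) :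
    ⇑l • p ∈ periodicPolynomial G (n + 1) := by
  classical
  have l_smul_eq : ⇑l • p =
      ∑ i, l (fun k => if i = k then 1 else 0) • (fun x : σ → R => x i) • p := by
    ext x
    simp [LinearMap.pi_apply_eq_sum_univ l x, sum_smul, smul_smul, mul_comm]
  rw [l_smul_eq]
  exact sum_mem fun i _ => Submodule.smul_mem _ _ (coord_smul_mem hp i)

theorem le_diffKer :
    periodicPolynomial G n ≤ (diffKer R G (n + 1) : Submodule R ((σ → R) → F)) := by
  refine le_iff.2 fun j hj f hf => ?_
  have monomial_mem : coordMonomial R j ∈ diffKer R G (∑ k, j k + 1) := by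
    have coordMonomial_eq :
        coordMonomial R j = ∏ k, ⇑(Pi.evalAddMonoidHom (fun _ => R) k) ^ j k := by
      ext x; simp [coordMonomial]
    rw [coordMonomial_eq]
    exact diffKer.prod_mem univ fun k _ => diffKer.pow_mem (diffKer.addMonoidHom_mem _) (j k)
  exact diffKer.smul_mem monomial_mem (diffKer.mem_one_iff.2 hf.2) (by omega)

theorem eq_iSup_filter [DecidableEq σ] :
    (periodicPolynomial G n : Submodule R ((σ → R) → F)) =
      ⨆ j ∈ ({j | ∑ k, (j k : ℕ) ≤ n} : Finset (σ → Fin (n + 1))),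
        (continuousPeriodic R G).map (DistribSMul.toLinearMap R ((σ → R) → F)
          (coordMonomial R fun k => (j k : ℕ))) := by
  refine le_antisymm (iSup₂_le fun j hj => ?_) (iSup₂_le fun j hj => ?_)
  · have hlt (k : σ) : j k < n + 1 :=
      Nat.lt_succ_of_le ((single_le_sum_of_canonicallyOrdered (mem_univ k)).trans hj)
    exact le_iSup₂_of_le (fun k => ⟨j k, hlt k⟩) (by simpa using hj) le_rfl
  · exact le_iSup₂_of_le (fun k => (j k : ℕ)) (by simpa using hj) le_rfl

theorem mem_iff_exists_sum [DecidableEq σ] : p ∈ periodicPolynomial G n ↔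
    ∃ f : (σ → Fin (n + 1)) → (σ → R) → F, (∀ j, Continuous (f j)) ∧
      (∀ j, ∀ g ∈ G, Function.Periodic (f j) g) ∧
      ∀ x, p x = ∑ j with ∑ k, (j k : ℕ) ≤ n, (∏ k, x k ^ (j k : ℕ)) • f j x := by
  rw [eq_iSup_filter, Submodule.mem_iSup_finset_iff_exists_sum]
  constructor
  · rintro ⟨μ, rfl⟩
    choose f hf hfμ using fun j => (μ j).2
    refine ⟨f, fun j => (hf j).1, fun j => (hf j).2, fun x => ?_⟩
    simp [← hfμ, coordMonomial]
  · rintro ⟨f, hcont, hper, hsum⟩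
    refine ⟨fun j => ⟨_, Submodule.mem_map_of_mem ⟨hcont j, hper j⟩⟩, funext fun x => ?_⟩
    simp [hsum, coordMonomial]

end periodicPolynomial

end PeriodicPolynomial

theorem mem_periodicPolynomial_of_mem_diffKer {ι σ 𝕜 F : Type*} [Finite ι] [DecidableEq ι]
    [Fintype σ] [Field 𝕜] [CharZero 𝕜] [TopologicalSpace 𝕜] [IsTopologicalRing 𝕜]
    [AddCommGroup F] [Module 𝕜 F] [TopologicalSpace F] [IsTopologicalAddGroup F]
    [ContinuousSMul 𝕜 F] {n : ℕ}
    {p : (σ → 𝕜) → F} {b : ι → σ → 𝕜} {ℓ : ι → (σ → 𝕜) →ₗ[𝕜] 𝕜}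
    (hℓ : ∀ i j, ℓ i (b j) = if i = j then 1 else 0) (hp : Continuous p)
    (hpn : p ∈ diffKer 𝕜 (AddSubgroup.closure (Set.range b)) (n + 1)) :
    p ∈ periodicPolynomial (AddSubgroup.closure (Set.range b)) n := by
  cases nonempty_fintype ι
  have fwdDiff_coord (i j : ι) : Δ_[b j] ⇑(ℓ i) = if i = j then 1 else 0 := by
    ext x
    simp [fwdDiff, hℓ, apply_ite (fun f : (σ → 𝕜) → 𝕜 => f x)]
  induction n generalizing p with
  | zero => exact periodicPolynomial.continuousPeriodic_le ⟨hp, diffKer.mem_one_iff.1 hpn⟩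
  | succ n ih =>
    have continuous_fwdDiff (i : ι) : Continuous (Δ_[b i] p) := by
      unfold fwdDiff; fun_prop
    set E := eulerOperator b (fun i => ⇑(ℓ i)) p
    have E_mem : E ∈ periodicPolynomial (AddSubgroup.closure (Set.range b)) (n + 1) :=
      sum_mem fun i _ => periodicPolynomial.linearMap_smul_mem (ih (continuous_fwdDiff i)
        (diffKer.mem_closure_succ_iff.1 hpn _ (Set.mem_range_self i))) (ℓ i)
    have continuous_E : Continuous E := by
      have continuous_ℓ (i : ι) : Continuous (ℓ i) := (ℓ i).continuous_on_pi
      simp only [E, eulerOperator, sum_fn]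
      fun_prop
    have E_sub_mem : E - (n + 1) • p ∈
        periodicPolynomial (AddSubgroup.closure (Set.range b)) (n + 1) :=
      periodicPolynomial.monotone n.le_succ <| ih (continuous_E.sub (hp.const_smul (n + 1)))
        (eulerOperator_sub_nsmul_mem_diffKer fwdDiff_coord hpn)
    have p_eq : p = ((n + 1 : ℕ) : 𝕜)⁻¹ • (E - (E - (n + 1) • p)) := by
      rw [sub_sub_cancel, ← Nat.cast_smul_eq_nsmul 𝕜,
        inv_smul_smul₀ (Nat.cast_ne_zero.2 n.succ_ne_zero)]
    rw [p_eq]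
    exact Submodule.smul_mem _ _ (sub_mem E_mem E_sub_mem)

theorem transD_succ_eq_transD_fwdDiff {r n : ℕ} (p : (Fin r → ℝ) → ℝ)
    (g : Fin (n + 1) → Fin r → ℝ) :
    transD r (n + 1) p g = transD r n (Δ_[g 0] p) (Fin.tail g) := by
  induction n with
  | zero => rfl
  | succ n ih => rw [transD, ih]; rfl

theorem forall_transD_eq_zero_iff {r n : ℕ} {G : AddSubgroup (Fin r → ℝ)}
    {p : (Fin r → ℝ) → ℝ} :
    (∀ g : Fin n → Fin r → ℝ, (∀ i, g i ∈ G) → ∀ x, transD r n p g x = 0) ↔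
      p ∈ diffKer ℝ G n := by
  induction n generalizing p with
  | zero => simp [diffKer.mem_zero_iff, transD, funext_iff]
  | succ n ih =>
    simp only [Fin.forall_fin_succ_pi, Fin.forall_fin_succ, transD_succ_eq_transD_fwdDiff,
      Fin.cons_zero, Fin.cons_succ, Fin.tail_cons, diffKer.mem_succ_iff, ← ih]
    tauto

theorem stmt_18_general {ι σ 𝕜 F : Type*} [Fintype σ] [DecidableEq σ] [Field 𝕜] [CharZero 𝕜]
    [TopologicalSpace 𝕜] [IsTopologicalRing 𝕜] [AddCommGroup F] [Module 𝕜 F] [TopologicalSpace F]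
    [IsTopologicalAddGroup F] [ContinuousSMul 𝕜 F] {b : ι → σ → 𝕜} (hb : LinearIndependent 𝕜 b)
    (n : ℕ) {p : (σ → 𝕜) → F} (hp : Continuous p) :
    p ∈ diffKer 𝕜 (AddSubgroup.closure (Set.range b)) (n + 1) ↔
      ∃ f : (σ → Fin (n + 1)) → (σ → 𝕜) → F, (∀ j, Continuous (f j)) ∧
        (∀ j, ∀ g ∈ AddSubgroup.closure (Set.range b), Function.Periodic (f j) g) ∧
        ∀ x, p x = ∑ j with ∑ k, (j k : ℕ) ≤ n, (∏ k, x k ^ (j k : ℕ)) • f j x := by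
  classical
  have := hb.finite
  obtain ⟨ℓ, hℓ⟩ := exists_dual_family hb
  rw [← periodicPolynomial.mem_iff_exists_sum]
  exact ⟨mem_periodicPolynomial_of_mem_diffKer hℓ hp, fun h => periodicPolynomial.le_diffKer h⟩

/-- Let `G ⊂ ℝ^r` be a lattice of rank `r` (generated by `r`
linearly independent vectors `b₁,…,b_r`) acting on `C(ℝ^r)` by translations.
A continuous function `p` satisfies `D^{n+1} p = 0` (for all shifts from `G`)
if and only if `p` is a `G`-periodic polynomial of degree at most `n`, i.e.
`p(x) = Σ_{j₁+⋯+j_r ≤ n} f_{j₁,…,j_r}(x) x₁^{j₁}⋯x_r^{j_r}` with all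
coefficients `f_{j₁,…,j_r}` continuous and `G`-periodic.  (Multi-indices with
total degree at most `n` are encoded as functions `Fin r → Fin (n+1)` whose
values sum to at most `n`.) -/
theorem stmt_18 (r : ℕ) (b : Fin r → (Fin r → ℝ)) (hb : LinearIndependent ℝ b)
    (n : ℕ) (p : (Fin r → ℝ) → ℝ) (hp : Continuous p) :
    (∀ g : Fin (n + 1) → (Fin r → ℝ),
        (∀ i, g i ∈ AddSubgroup.closure (Set.range b)) →
        ∀ x, transD r (n + 1) p g x = 0)
      ↔ ∃ f : (Fin r → Fin (n + 1)) → ((Fin r → ℝ) → ℝ),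
          (∀ j, Continuous (f j)) ∧
          (∀ j, ∀ g ∈ AddSubgroup.closure (Set.range b), ∀ x,
            f j (x + g) = f j x) ∧
          (∀ x, p x =
            ∑ j ∈ Finset.univ.filter
                (fun j : Fin r → Fin (n + 1) => (∑ k, (j k : ℕ)) ≤ n),
              f j x * ∏ k, x k ^ (j k : ℕ)) := by
  rw [forall_transD_eq_zero_iff, stmt_18_general hb n hp]
  simp only [smul_eq_mul, mul_comm, Function.Periodic]
end

section
/- Let G ⊂ R^r be a lattice of rank r acting on C(R^r) by translations, and let A be a G-invariant vector subspace of C(R^r). Set A^G = A ∩ C^G (the G-periodic functions in A) and, for n ≥ 0, let P_n^G(A) be the space of all G-periodic polynomials of degree at most n that belong to A. If dim A^G < ∞, then dim P_n^G(A) < ∞ for every n ≥ 0. -/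
/-- `p : ℝ^r → ℝ` is a `G`-periodic polynomial of degree at most `n`:
`p(x) = Σ_{j₁+⋯+j_r ≤ n} f_{j₁,…,j_r}(x) x₁^{j₁}⋯x_r^{j_r}` for some
continuous `G`-periodic coefficient functions `f_{j₁,…,j_r}`.  (Multi-indices
with total degree at most `n` are encoded as functions `Fin r → Fin (n+1)`
whose values sum to at most `n`.) -/
def IsPeriodicPoly (r : ℕ) (G : AddSubgroup (Fin r → ℝ)) (n : ℕ)
    (p : (Fin r → ℝ) → ℝ) : Prop :=
  ∃ f : (Fin r → Fin (n + 1)) → ((Fin r → ℝ) → ℝ),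
    (∀ j, Continuous (f j)) ∧
    (∀ j, ∀ g ∈ G, ∀ x, f j (x + g) = f j x) ∧
    (∀ x, p x =
      ∑ j ∈ Finset.univ.filter
          (fun j : Fin r → Fin (n + 1) => (∑ k, (j k : ℕ)) ≤ n),
        f j x * ∏ k, x k ^ (j k : ℕ))

/-!
Coordinates become constants and periodic functions become `0` under every difference operator
`Δ_[g]`, `g ∈ G`. By the Leibniz rule, a periodic polynomial of degree at most `n` is therefore
killed by any `n + 1` successive differences along generators `b i` of `G`. Let `F n` be the space
of functions killed by any `n` successive differences along the `b i`, so that `F 1` is the space of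
periodic functions. The map `p ↦ (Δ_[b i] p)_i` sends `A ⊓ F (n + 1)` into finitely many copies of
`A ⊓ F n`, with kernel inside `A ⊓ F 1 = A^G`, so all `A ⊓ F n` are finite dimensional by induction.
-/

section IteratedKer

variable {ι R V : Type*}

section Semiring

variable [Semiring R] [AddCommMonoid V] [Module R V]

/-- The vectors killed by every composition of `n` members, repetitions allowed, of the family `D`
of endomorphisms, which need not commute. It generalizes `ker (D ^ n)`. -/
def iteratedKer (D : ι → Module.End R V) : ℕ → Submodule R V
  | 0 => ⊥
  | n + 1 => ⨅ i, (iteratedKer D n).comap (D i)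

theorem mem_iteratedKer_succ {D : ι → Module.End R V} {n : ℕ} {v : V} :
    v ∈ iteratedKer D (n + 1) ↔ ∀ i, D i v ∈ iteratedKer D n := by
  simp only [iteratedKer, Submodule.mem_iInf, Submodule.mem_comap]

theorem iteratedKer_one (D : ι → Module.End R V) : iteratedKer D 1 = ⨅ i, LinearMap.ker (D i) :=
  rfl

theorem iteratedKer_mono (D : ι → Module.End R V) : Monotone (iteratedKer D) := by
  refine monotone_nat_of_le_succ fun n => ?_
  induction n with
  | zero => exact bot_le
  | succ n ih => exact iInf_mono fun i => Submodule.comap_mono ih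

end Semiring

theorem fg_inf_iteratedKer [Finite ι] [Ring R] [IsNoetherianRing R] [AddCommGroup V] [Module R V]
    {D : ι → Module.End R V} {A : Submodule R V} (hA : ∀ i, A ≤ A.comap (D i))
    (hker : (A ⊓ ⨅ i, LinearMap.ker (D i)).FG) (n : ℕ) : (A ⊓ iteratedKer D n).FG := by
  induction n with
  | zero => simpa only [iteratedKer, inf_bot_eq] using Submodule.fg_bot
  | succ n ih =>
    refine Submodule.fg_of_fg_map_of_fg_inf_ker (LinearMap.pi D) ?_ ?_
    · refine (Submodule.fg_pi fun _ : ι => ih).of_le ?_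
      rintro _ ⟨v, ⟨hvA, hv⟩, rfl⟩ i -
      exact ⟨hA i hvA, mem_iteratedKer_succ.1 hv i⟩
    · rw [LinearMap.ker_pi]
      exact hker.of_le (inf_le_inf_right _ inf_le_left)

end IteratedKer

section FwdDiff

open scoped fwdDiff

variable {ι M R V : Type*}

section Module

variable [AddCommMonoid M] [Semiring R] [AddCommGroup V] [Module R V]

variable (R) in
/-- The forward difference operator `Δ_[h]` as an `R`-linear endomorphism; Mathlib's
`fwdDiff_aux.fwdDiffₗ` is only `ℤ`-linear. -/
def fwdDiffEnd (h : M) : Module.End R (M → V) where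
  toFun := fwdDiff h
  map_add' := fwdDiff_add h
  map_smul' := fwdDiff_const_smul h

variable (R) in
/-- The functions of degree less than `n` relative to the difference operators along the vectors
`b i`, that is, those killed by any `n` successive such differences. As for `Polynomial.degreeLT`,
the bound is strict, so that only `0` has degree less than `0`. -/
def fwdDiffDegreeLT (b : ι → M) (n : ℕ) : Submodule R (M → V) :=
  iteratedKer (fun i => fwdDiffEnd R (b i)) n

variable {b : ι → M}

theorem mem_fwdDiffDegreeLT_zero {f : M → V} : f ∈ fwdDiffDegreeLT R b 0 ↔ f = 0 :=
  Submodule.mem_bot R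

theorem mem_fwdDiffDegreeLT_succ {n : ℕ} {f : M → V} :
    f ∈ fwdDiffDegreeLT R b (n + 1) ↔ ∀ i, Δ_[b i] f ∈ fwdDiffDegreeLT R b n :=
  mem_iteratedKer_succ

theorem fwdDiffDegreeLT_mono : Monotone (fwdDiffDegreeLT (V := V) R b) :=
  iteratedKer_mono _

theorem const_mem_fwdDiffDegreeLT_one (c : V) : (fun _ => c) ∈ fwdDiffDegreeLT R b 1 :=
  mem_fwdDiffDegreeLT_succ.2 fun i => mem_fwdDiffDegreeLT_zero.2 (fwdDiff_const (b i) c)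

theorem addMonoidHom_mem_fwdDiffDegreeLT_two (φ : M →+ V) : ⇑φ ∈ fwdDiffDegreeLT R b 2 := by
  refine mem_fwdDiffDegreeLT_succ.2 fun i => ?_
  have hφ : Δ_[b i] φ = fun _ => φ (b i) := by
    ext x
    simp only [fwdDiff, map_add, add_sub_cancel_left]
  exact hφ ▸ const_mem_fwdDiffDegreeLT_one (φ (b i))

end Module

theorem mem_fwdDiffDegreeLT_one_iff_periodic [AddCommGroup M] [Semiring R] [AddCommGroup V]
    [Module R V] {b : ι → M} {f : M → V} :
    f ∈ fwdDiffDegreeLT R b 1 ↔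
      ∀ g ∈ AddSubgroup.closure (Set.range b), Function.Periodic f g := by
  simp only [mem_fwdDiffDegreeLT_succ, mem_fwdDiffDegreeLT_zero, funext_iff, fwdDiff,
    Pi.zero_apply, sub_eq_zero]
  refine ⟨fun hf g hg => ?_, fun hf i => hf (b i) (AddSubgroup.subset_closure ⟨i, rfl⟩)⟩
  induction hg using AddSubgroup.closure_induction with
  | mem g hg =>
    obtain ⟨i, rfl⟩ := hg
    exact hf i
  | zero => exact fun x => by rw [add_zero]
  | add g h _ _ hg hh => exact hg.add_period hh
  | neg g _ hg => exact hg.neg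

theorem fg_inf_fwdDiffDegreeLT [Finite ι] [AddCommMonoid M] [Ring R] [IsNoetherianRing R]
    [AddCommGroup V] [Module R V] {b : ι → M} {A : Submodule R (M → V)}
    (hA : ∀ i, ∀ f ∈ A, (fun x => f (x + b i)) ∈ A) (hone : (A ⊓ fwdDiffDegreeLT R b 1).FG)
    (n : ℕ) : (A ⊓ fwdDiffDegreeLT R b n).FG := by
  refine fg_inf_iteratedKer (fun i f hf => ?_) ?_ n
  · exact A.sub_mem (hA i f hf) hf
  · rwa [fwdDiffDegreeLT, iteratedKer_one] at hone

section Mul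

variable [AddCommMonoid M] [Ring R] {b : ι → M}

theorem fwdDiff_mul (h : M) (f g : M → R) :
    Δ_[h] (f * g) = Δ_[h] f * g + (f + Δ_[h] f) * Δ_[h] g := by
  rw [add_mul, ← add_assoc]
  exact fwdDiff_smul h f g

theorem mul_mem_fwdDiffDegreeLT {m n : ℕ} {f g : M → R} (hf : f ∈ fwdDiffDegreeLT R b m)
    (hg : g ∈ fwdDiffDegreeLT R b (n + 1)) : f * g ∈ fwdDiffDegreeLT R b (m + n) := by
  induction m generalizing n f g with
  | zero =>
    rw [mem_fwdDiffDegreeLT_zero.1 hf, zero_mul]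
    exact zero_mem _
  | succ m ihm =>
    induction n generalizing f g with
    | zero =>
      refine mem_fwdDiffDegreeLT_succ.2 fun i => ?_
      have hgi : Δ_[b i] g = 0 := mem_fwdDiffDegreeLT_zero.1 (mem_fwdDiffDegreeLT_succ.1 hg i)
      rw [fwdDiff_mul, hgi, mul_zero, add_zero]
      exact ihm (mem_fwdDiffDegreeLT_succ.1 hf i) hg
    | succ n ihn =>
      refine mem_fwdDiffDegreeLT_succ.2 fun i => ?_
      have hfi := mem_fwdDiffDegreeLT_succ.1 hf i
      have hshift : f + Δ_[b i] f ∈ fwdDiffDegreeLT R b (m + 1) :=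
        add_mem hf (fwdDiffDegreeLT_mono m.le_succ hfi)
      rw [fwdDiff_mul]
      have hfig : Δ_[b i] f * g ∈ fwdDiffDegreeLT R b (m + 1 + n) := by
        rw [Nat.succ_add_eq_add_succ]
        exact ihm hfi hg
      exact add_mem hfig (ihn hshift (mem_fwdDiffDegreeLT_succ.1 hg i))

instance gradedMonoid_fwdDiffDegreeLT :
    SetLike.GradedMonoid fun n => (fwdDiffDegreeLT R b (n + 1) : Submodule R (M → R)) where
  one_mem := const_mem_fwdDiffDegreeLT_one 1
  mul_mem m n _ _ hf hg := by
    simpa only [Nat.add_right_comm m 1 n] using mul_mem_fwdDiffDegreeLT hf hg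

end Mul

end FwdDiff

section PeriodicPoly

theorem monomial_mem_fwdDiffDegreeLT {ι κ R : Type*} [CommRing R] (b : ι → κ → R)
    (s : Finset κ) (j : κ → ℕ) :
    (fun x => ∏ k ∈ s, x k ^ j k) ∈ fwdDiffDegreeLT R b ((∑ k ∈ s, j k) + 1) := by
  have hcoord (k : κ) : (fun x : κ → R => x k) ∈ fwdDiffDegreeLT R b 2 :=
    addMonoidHom_mem_fwdDiffDegreeLT_two (Pi.evalAddMonoidHom (fun _ => R) k)
  have hprod := SetLike.prod_pow_mem_graded
    (fun n => (fwdDiffDegreeLT R b (n + 1) : Submodule R ((κ → R) → R)))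
    (fun _ => 1) (fun k x => x k) j fun k (_ : k ∈ s) => hcoord k
  simpa only [smul_eq_mul, mul_one, Finset.prod_fn, Pi.pow_def] using hprod

theorem IsPeriodicPoly.mem_fwdDiffDegreeLT {ι : Type*} {r n : ℕ} {b : ι → Fin r → ℝ}
    {p : (Fin r → ℝ) → ℝ} (hp : IsPeriodicPoly r (AddSubgroup.closure (Set.range b)) n p) :
    p ∈ fwdDiffDegreeLT ℝ b (n + 1) := by
  obtain ⟨f, -, hf, hsum⟩ := hp
  have hp_eq : p = ∑ j with ∑ k, (j k : ℕ) ≤ n, f j * fun x => ∏ k, x k ^ (j k : ℕ) := by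
    ext x
    simp only [hsum x, Finset.sum_apply, Pi.mul_apply]
  rw [hp_eq]
  refine sum_mem fun j hj => ?_
  have hdeg : 1 + ∑ k, (j k : ℕ) ≤ n + 1 := by
    have := (Finset.mem_filter.1 hj).2
    lia
  have hcoeff : f j ∈ fwdDiffDegreeLT ℝ b 1 := mem_fwdDiffDegreeLT_one_iff_periodic.2 (hf j)
  exact fwdDiffDegreeLT_mono hdeg
    (mul_mem_fwdDiffDegreeLT hcoeff (monomial_mem_fwdDiffDegreeLT b _ _))

end PeriodicPoly

theorem stmt_19_general (r : ℕ) (G : AddSubgroup (Fin r → ℝ)) (hG : G.FG)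
    (A : Submodule ℝ ((Fin r → ℝ) → ℝ))
    (hinv : ∀ f ∈ A, ∀ g ∈ G, (fun x => f (x + g)) ∈ A)
    (hfin : ∃ s : Finset ((Fin r → ℝ) → ℝ),
      ∀ f ∈ A, (∀ g ∈ G, ∀ x, f (x + g) = f x) →
        f ∈ Submodule.span ℝ (s : Set ((Fin r → ℝ) → ℝ)))
    (n : ℕ) :
    ∃ t : Finset ((Fin r → ℝ) → ℝ),
      ∀ p ∈ A, IsPeriodicPoly r G n p →
        p ∈ Submodule.span ℝ (t : Set ((Fin r → ℝ) → ℝ)) := by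
  obtain ⟨S, hS⟩ := hG
  let b : S → Fin r → ℝ := Subtype.val
  obtain rfl : AddSubgroup.closure (Set.range b) = G := by rwa [Subtype.range_coe]
  obtain ⟨s, hs⟩ := hfin
  have hperiodic : (A ⊓ fwdDiffDegreeLT ℝ b 1).FG :=
    Submodule.FG.of_le ⟨s, rfl⟩ fun f hf =>
      hs f hf.1 (mem_fwdDiffDegreeLT_one_iff_periodic.1 hf.2)
  have hshift (i : S) (f : (Fin r → ℝ) → ℝ) (hf : f ∈ A) : (fun x => f (x + b i)) ∈ A :=
    hinv f hf (b i) (AddSubgroup.subset_closure ⟨i, rfl⟩)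
  obtain ⟨t, ht⟩ := fg_inf_fwdDiffDegreeLT hshift hperiodic (n + 1)
  exact ⟨t, fun p hpA hp => ht ▸ ⟨hpA, hp.mem_fwdDiffDegreeLT⟩⟩

/-- Let `G ⊂ ℝ^r` be a lattice of rank `r` (generated by `r`
linearly independent vectors `b₁,…,b_r`) acting on `C(ℝ^r)` by translations,
and let `A` be a `G`-invariant subspace of `C(ℝ^r)` (a subspace of functions,
all continuous, stable under translation by elements of `G`).  If the space
`A^G` of `G`-periodic functions in `A` is finite dimensional (equivalently,
contained in the span of a finite set), then for every `n ≥ 0` the space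
`P_n^G(A)` of `G`-periodic polynomials of degree at most `n` belonging to `A`
is finite dimensional (contained in the span of a finite set). -/
theorem stmt_19 (r : ℕ) (b : Fin r → (Fin r → ℝ)) (hb : LinearIndependent ℝ b)
    (A : Submodule ℝ ((Fin r → ℝ) → ℝ))
    (hcont : ∀ f ∈ A, Continuous f)
    (hinv : ∀ f ∈ A, ∀ g ∈ AddSubgroup.closure (Set.range b),
      (fun x => f (x + g)) ∈ A)
    (hfin : ∃ s : Finset ((Fin r → ℝ) → ℝ),
      ∀ f ∈ A, (∀ g ∈ AddSubgroup.closure (Set.range b), ∀ x, f (x + g) = f x) →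
        f ∈ Submodule.span ℝ (s : Set ((Fin r → ℝ) → ℝ)))
    (n : ℕ) :
    ∃ t : Finset ((Fin r → ℝ) → ℝ),
      ∀ p ∈ A, IsPeriodicPoly r (AddSubgroup.closure (Set.range b)) n p →
        p ∈ Submodule.span ℝ (t : Set ((Fin r → ℝ) → ℝ)) :=
  stmt_19_general r _ ⟨(Set.finite_range b).toFinset, by rw [Set.Finite.coe_toFinset]⟩
    A hinv hfin n
end
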